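/- Let 𝒜 ∈ Struc_{c1,c2} be a structure that contains the identity relation id_{U_𝒜} among its relations, and let Q = {c1,c2}^∞. Then {Res_ℳ | ℳ ∈ M_𝒜^{NDB}} ⊆ {Res_ℳ | ℳ ∈ M_𝒜^ν(Q)}: every binary non-deterministic branching 'goto ℓ₁ or goto ℓ₂' can be simulated by applying the ν-operator to Q and testing, via an equality test, whether the guessed value equals c1. -/

import Mathlib

/-! A machine branching by `goto ℓ₁ or goto ℓ₂` is simulated by guessing a tuple over `{c₁, c₂}`
from register `1` on and comparing register `1` with `c₁`. The difficulty is that the guessed tuple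
may have any length, so that it can overwrite arbitrarily much of the memory, undetectably so by
a mere inspection of the registers when the memory itself consists of constants.

The remedy is to store in an index register, which a guess cannot touch, a number coding for every
register in use whether it holds `c₁`, `c₂` or something else (`NuSim.code`). It is computed by
counter loops (`NuSim.enc_spec`) before and after the guess. Since a guess writes nothing
but `c₁` and `c₂`, equality of the two codes means that no register in use has changed
(`NuSim.dig_eq_of_code_eq`, `NuSim.eq_of_dig_eq`); if the codes differ, the machine loops forever
and contributes no result. A guess of length one is always harmless, so both branches remain
available.

"In use" is made precise by an index register holding a bound `P` on everything the simulated
machine can address. The simulated registers from `P` on all have the same value, and only those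
up to `P` have to be represented correctly (`NuSim.Rel`); when an index register is incremented,
the content of register `P` is copied to register `P + 1` and `P` is increased. Registers `1` and
`2` serve as work space during the simulation of a branching, their contents being saved in
registers `P + 1` and `P + 2`. Register `0` is not used, because no copy instruction could save it:
index registers are never `0`.

Each label `l` of the simulated machine corresponds to a block of `S` instructions. A block is
deterministic except for the guess, so halting runs of the two machines can be translated into each
other block by block, by induction on their length (`NuSim.forward`, `NuSim.backward`). -/

/-!
A formalization of BSS RAMs over first-order structures (following C. Gaßner,
"Abstract computation over first-order structures", Part II b).

We model a first-order structure with indexed constants, operations and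
relations, machines given by finite programs of labeled instructions
(including binary non-deterministic branching `orGoto` and Moschovakis'
`ν`-operator instructions `nuGuess`), configurations, the (non-deterministic)
transition relation, halting sets, semi-decidability and decidability, the
various non-deterministic machine classes and their result functions.
-/

/-- A first-order structure: a universe together with indexed constants,
operations and relations. -/
structure FOStruct where
  U : Type
  constIdx : Type
  consts : constIdx → U
  opIdx : Type
  ops : opIdx → List U → U
  relIdx : Type
  rels : relIdx → List U → Prop

/-- `U^∞`: all finite nonempty tuples over the universe of `A`. -/
abbrev Tup (A : FOStruct) : Type := { l : List A.U // l ≠ [] }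

/-- Instructions of BSS RAMs over `A`.  The first seven kinds are the
deterministic instruction types; `orGoto` is the binary non-deterministic
branching instruction `goto ℓ₁ or goto ℓ₂`; `nuGuess j` is a ν-oracle
instruction writing a non-deterministically chosen tuple of the oracle set
into the registers `Z_j, Z_{j+1}, …`. -/
inductive Instr (A : FOStruct) : Type where
  | apply (j : ℕ) (i : A.opIdx) (args : List ℕ)
  | const (j : ℕ) (i : A.constIdx)
  | copy (j k : ℕ)
  | branchRel (i : A.relIdx) (args : List ℕ) (l₁ l₂ : ℕ)
  | branchIdx (j k l₁ l₂ : ℕ)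
  | incIdx (j : ℕ)
  | resetIdx (j : ℕ)
  | orGoto (l₁ l₂ : ℕ)
  | nuGuess (j : ℕ)

/-- A configuration: current label, index registers, and `Z`-registers. -/
structure Config (A : FOStruct) where
  label : ℕ
  idx : ℕ → ℕ
  reg : ℕ → A.U

/-- A machine: a finite program together with an oracle set (only used by
`nuGuess` instructions). -/
structure Machine (A : FOStruct) where
  prog : List (Instr A)
  oracle : Set (Tup A)

open scoped Classical in
/-- Execution of a deterministic instruction. -/
noncomputable def execDet {A : FOStruct} (ins : Instr A) (c : Config A) : Config A :=
  match ins with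
  | .apply j i args =>
      { c with label := c.label + 1, reg := Function.update c.reg j (A.ops i (args.map c.reg)) }
  | .const j i =>
      { c with label := c.label + 1, reg := Function.update c.reg j (A.consts i) }
  | .copy j k =>
      { c with label := c.label + 1, reg := Function.update c.reg (c.idx j) (c.reg (c.idx k)) }
  | .branchRel i args l₁ l₂ =>
      { c with label := if A.rels i (args.map c.reg) then l₁ else l₂ }
  | .branchIdx j k l₁ l₂ =>
      { c with label := if c.idx j = c.idx k then l₁ else l₂ }
  | .incIdx j =>
      { c with label := c.label + 1, idx := Function.update c.idx j (c.idx j + 1) }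
  | .resetIdx j =>
      { c with label := c.label + 1, idx := Function.update c.idx j 1 }
  | .orGoto l₁ _ => { c with label := l₁ }
  | .nuGuess _ => { c with label := c.label + 1 }

/-- Write the components of the list `l` into the registers `j, j+1, …`. -/
def writeFrom {A : FOStruct} (reg : ℕ → A.U) (j : ℕ) (l : List A.U) : ℕ → A.U :=
  fun i => if j ≤ i ∧ i - j < l.length then l.getD (i - j) (reg i) else reg i

/-- The (in general non-deterministic) one-step transition relation of `M`. -/
def NStep {A : FOStruct} (M : Machine A) (c c' : Config A) : Prop :=
  ∃ ins, M.prog[c.label]? = some ins ∧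
    match ins with
    | Instr.orGoto l₁ l₂ => c' = { c with label := l₁ } ∨ c' = { c with label := l₂ }
    | Instr.nuGuess j =>
        ∃ y ∈ M.oracle, c' = { c with label := c.label + 1, reg := writeFrom c.reg j y.1 }
    | _ => c' = execDet ins c

/-- Reachability of configurations. -/
def Reaches {A : FOStruct} (M : Machine A) : Config A → Config A → Prop :=
  Relation.ReflTransGen (NStep M)

/-- A configuration is halted if its label is the stop label (or beyond the
program). -/
def Halted {A : FOStruct} (M : Machine A) (c : Config A) : Prop := M.prog.length ≤ c.label

/-- Some computation of `M` starting in `c` reaches the stop instruction. -/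
def HaltsFrom {A : FOStruct} (M : Machine A) (c : Config A) : Prop :=
  ∃ c', Reaches M c c' ∧ Halted M c'

/-- The initial configuration for the input tuple `x` (single-valued input
function (I1)): `(1 . (n,1,…,1) . x . (x_n, x_n, …))`. -/
def inputConfig (A : FOStruct) (x : Tup A) : Config A :=
  { label := 0
    idx := fun j => if j = 1 then x.1.length else 1
    reg := fun i => x.1.getD i (x.1.getLast x.2) }

/-- The initial configuration for input `x` together with a guessed tuple `y`
(multi-valued input function (I3′)): `((n,1,…,1) . x . y . (x_n, x_n, …))`. -/
def inputConfigG (A : FOStruct) (x y : Tup A) : Config A :=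
  { label := 0
    idx := fun j => if j = 1 then x.1.length else 1
    reg := fun i => (x.1 ++ y.1).getD i (x.1.getLast x.2) }

/-- The output of a configuration: the tuple `(u_1, …, u_{ν₁})`. -/
def output {A : FOStruct} (c : Config A) : Tup A :=
  ⟨(List.range (max (c.idx 1) 1)).map c.reg, by
    intro hcon
    have h1 := congrArg List.length hcon
    simp only [List.length_map, List.length_range, List.length_nil] at h1
    omega⟩

/-- All outputs of halting computations of `M` starting in `c`. -/
def ResFrom {A : FOStruct} (M : Machine A) (c : Config A) : Set (Tup A) :=
  { z | ∃ c', Reaches M c c' ∧ Halted M c' ∧ output c' = z }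

/-- The result function of `M` (for machines with input function (I1)). -/
def Res {A : FOStruct} (M : Machine A) (x : Tup A) : Set (Tup A) :=
  ResFrom M (inputConfig A x)

/-- Deterministic instructions: neither `orGoto` nor `nuGuess`. -/
def Instr.isDet {A : FOStruct} : Instr A → Prop
  | .orGoto _ _ => False
  | .nuGuess _ => False
  | _ => True

/-- Instructions allowed in `M_A^{NDB}`-machines: no ν-instructions. -/
def Instr.noNu {A : FOStruct} : Instr A → Prop
  | .nuGuess _ => False
  | _ => True

/-- Instructions allowed in ν-oracle machines: no binary branching. -/
def Instr.noOr {A : FOStruct} : Instr A → Prop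
  | .orGoto _ _ => False
  | _ => True

/-- `M` is a deterministic BSS RAM (a machine in `M_A`). -/
def Machine.Det {A : FOStruct} (M : Machine A) : Prop := ∀ ins ∈ M.prog, ins.isDet

/-- `M` is a machine in `M_A^{NDB}` (binary non-deterministic branching
allowed). -/
def Machine.NDB {A : FOStruct} (M : Machine A) : Prop := ∀ ins ∈ M.prog, ins.noNu

/-- `M` is a ν-oracle machine in `M_A^ν(Q)`. -/
def Machine.NuMach {A : FOStruct} (M : Machine A) (Q : Set (Tup A)) : Prop :=
  (∀ ins ∈ M.prog, ins.noOr) ∧ M.oracle = Q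

/-- `SDEC_A`: the class of problems semi-decidable by a deterministic
BSS RAM in `M_A`. -/
def SDEC (A : FOStruct) : Set (Set (Tup A)) :=
  { P | ∃ M : Machine A, M.Det ∧ ∀ x, x ∈ P ↔ HaltsFrom M (inputConfig A x) }

/-- `DEC_A`: the class of decidable problems. -/
def DEC (A : FOStruct) : Set (Set (Tup A)) :=
  { P | P ∈ SDEC A ∧ Pᶜ ∈ SDEC A }

/-- `SDEC_A^{NDB}`: semi-decidability by machines with binary
non-deterministic branchings. -/
def SDECndb (A : FOStruct) : Set (Set (Tup A)) :=
  { P | ∃ M : Machine A, M.NDB ∧ ∀ x, x ∈ P ↔ HaltsFrom M (inputConfig A x) }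

/-- `(SDEC_A^ν)^Q`: semi-decidability by ν-oracle machines with oracle `Q`. -/
def SDECnu (A : FOStruct) (Q : Set (Tup A)) : Set (Set (Tup A)) :=
  { P | ∃ M : Machine A, M.NuMach Q ∧ ∀ x, x ∈ P ↔ HaltsFrom M (inputConfig A x) }

/-- A tuple is digital (w.r.t. `c₁, c₂`) if all its components are among the
two constants. -/
def Digital {A : FOStruct} (c₁ c₂ : A.U) (y : Tup A) : Prop := ∀ u ∈ y.1, u = c₁ ∨ u = c₂

/-- `SDEC_A^{ND}`: acceptance by machines guessing arbitrary tuples. -/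
def SDECnd (A : FOStruct) : Set (Set (Tup A)) :=
  { P | ∃ M : Machine A, M.Det ∧ ∀ x, x ∈ P ↔ ∃ y : Tup A, HaltsFrom M (inputConfigG A x y) }

/-- `SDEC_A^{DND}`: acceptance by digitally non-deterministic machines whose
guesses range over tuples of the two constants. -/
def SDECdnd (A : FOStruct) (c₁ c₂ : A.U) : Set (Set (Tup A)) :=
  { P | ∃ M : Machine A, M.Det ∧
      ∀ x, x ∈ P ↔ ∃ y : Tup A, Digital c₁ c₂ y ∧ HaltsFrom M (inputConfigG A x y) }

/-- The result function of a machine used non-deterministically with guesses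
ranging over all tuples. -/
def ResND {A : FOStruct} (M : Machine A) (x : Tup A) : Set (Tup A) :=
  { z | ∃ y : Tup A, z ∈ ResFrom M (inputConfigG A x y) }

/-- The result function of a digitally non-deterministic machine. -/
def ResDND {A : FOStruct} (c₁ c₂ : A.U) (M : Machine A) (x : Tup A) : Set (Tup A) :=
  { z | ∃ y : Tup A, Digital c₁ c₂ y ∧ z ∈ ResFrom M (inputConfigG A x y) }

/-- The identity relation `id_{U_A}` viewed as a decision problem
(the set of pairs `(x, x)`). -/
def idSet (A : FOStruct) : Set (Tup A) := { p | ∃ x : A.U, p.1 = [x, x] }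

/-- The one-component tuple `(c)`. -/
def singTup (A : FOStruct) (c : A.U) : Tup A := ⟨[c], by simp⟩

/-- The singleton `{c}` viewed as a decision problem. -/
def singSet (A : FOStruct) (c : A.U) : Set (Tup A) := { p | p.1 = [c] }

/-- The two-element set `{c₁, c₂}` viewed as a decision problem. -/
def constPair (A : FOStruct) (c₁ c₂ : A.U) : Set (Tup A) := { p | p.1 = [c₁] ∨ p.1 = [c₂] }

/-- `{c₁,c₂}^∞`: all finite nonempty tuples over the two constants. -/
def binTups (A : FOStruct) (c₁ c₂ : A.U) : Set (Tup A) := { p | ∀ u ∈ p.1, u = c₁ ∨ u = c₂ }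

/-- `{c₁,c₂}²`: all pairs over the two constants. -/
def pairTups (A : FOStruct) (c₁ c₂ : A.U) : Set (Tup A) :=
  { p | ∃ u v : A.U, (u = c₁ ∨ u = c₂) ∧ (v = c₁ ∨ v = c₂) ∧ p.1 = [u, v] }

open scoped Classical in
/-- The characteristic function `χ_P` with values `c₁` (yes) and `c₂` (no). -/
noncomputable def chi (A : FOStruct) (c₁ c₂ : A.U) (P : Set (Tup A)) (x : Tup A) : Tup A :=
  if x ∈ P then singTup A c₁ else singTup A c₂

/-- `M` (a deterministic BSS RAM) computes the total function `f`. -/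
def ComputesFn (A : FOStruct) (M : Machine A) (f : Tup A → Tup A) : Prop :=
  M.Det ∧ ∀ x, Res M x = {f x}

/-- `A` contains the identity relation `id_{U_A}` among its relations. -/
def HasIdRel (A : FOStruct) : Prop := ∃ r : A.relIdx, ∀ x y : A.U, A.rels r [x, y] ↔ x = y

/-- `c` is a constant of the structure `A`. -/
def HasConst (A : FOStruct) (c : A.U) : Prop := ∃ i : A.constIdx, A.consts i = c

/-- The class of result functions of deterministic machines. -/
def ResClassDet (A : FOStruct) : Set (Tup A → Set (Tup A)) :=
  { f | ∃ M : Machine A, M.Det ∧ f = Res M }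

/-- `{Res_M | M ∈ M_A^{NDB}}`. -/
def ResClassNDB (A : FOStruct) : Set (Tup A → Set (Tup A)) :=
  { f | ∃ M : Machine A, M.NDB ∧ f = Res M }

/-- `{Res_M | M ∈ M_A^ν(Q)}`. -/
def ResClassNu (A : FOStruct) (Q : Set (Tup A)) : Set (Tup A → Set (Tup A)) :=
  { f | ∃ M : Machine A, M.NuMach Q ∧ f = Res M }

/-- `{Res_M | M ∈ M_A^{ND}}`. -/
def ResClassND (A : FOStruct) : Set (Tup A → Set (Tup A)) :=
  { f | ∃ M : Machine A, M.Det ∧ f = ResND M }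

/-- `{Res_M | M ∈ M_A^{DND}}`. -/
def ResClassDND (A : FOStruct) (c₁ c₂ : A.U) : Set (Tup A → Set (Tup A)) :=
  { f | ∃ M : Machine A, M.Det ∧ f = ResDND c₁ c₂ M }

namespace NuSim

/-! ### Deterministic segments of computations -/

/-- `c` has exactly one successor, namely `d`. -/
def DStep {A : FOStruct} (M : Machine A) (c d : Config A) : Prop := ∀ x, NStep M c x ↔ x = d

/-- From `c` the machine is forced, through deterministic steps, into a configuration
satisfying `Q`. -/
def DR {A : FOStruct} (M : Machine A) (c : Config A) (Q : Config A → Prop) : Prop :=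
  ∃ d, Relation.ReflTransGen (DStep M) c d ∧ Q d

/-- As `DR`, with at least one step. -/
def DR1 {A : FOStruct} (M : Machine A) (c : Config A) (Q : Config A → Prop) : Prop :=
  ∃ c₁, DStep M c c₁ ∧ DR M c₁ Q

/-- `h` is reached from `c` in exactly `n` steps. -/
def Run {A : FOStruct} (M : Machine A) : ℕ → Config A → Config A → Prop
  | 0, c, h => c = h
  | n + 1, c, h => ∃ d, NStep M c d ∧ Run M n d h

lemma exists_run {A : FOStruct} {M : Machine A} {c h : Config A} (hr : Reaches M c h) :
    ∃ n, Run M n c h := by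
  induction hr using Relation.ReflTransGen.head_induction_on with
  | refl => exact ⟨0, rfl⟩
  | head h1 _ ih => obtain ⟨n, hn⟩ := ih; exact ⟨n + 1, _, h1, hn⟩

lemma not_step_of_halted {A : FOStruct} {M : Machine A} {c d : Config A} (h : Halted M c) :
    ¬ NStep M c d := by
  rintro ⟨ins, hi, -⟩
  rw [List.getElem?_eq_none h] at hi
  cases hi

lemma DStep.run {A : FOStruct} {M : Machine A} {c d h : Config A} {n : ℕ} (hd : DStep M c d)
    (hh : Halted M h) (hr : Run M n c h) : ∃ m < n, Run M m d h := by
  cases n with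
  | zero =>
    cases hr
    exact absurd ((hd d).2 rfl) (not_step_of_halted hh)
  | succ n =>
    obtain ⟨x, hx, hr⟩ := hr
    rw [(hd x).1 hx] at hr
    exact ⟨n, Nat.lt_succ_self n, hr⟩

lemma run_of_dreach {A : FOStruct} {M : Machine A} {c d h : Config A}
    (hd : Relation.ReflTransGen (DStep M) c d) (hh : Halted M h) :
    ∀ {n : ℕ}, Run M n c h → ∃ m ≤ n, Run M m d h := by
  induction hd using Relation.ReflTransGen.head_induction_on with
  | refl => intro n hr; exact ⟨n, le_rfl, hr⟩
  | head h1 _ ih =>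
    intro n hr
    obtain ⟨m, hm, hr⟩ := h1.run hh hr
    obtain ⟨m', hm', hr⟩ := ih hr
    exact ⟨m', by omega, hr⟩

/-- A configuration that is its own only successor never halts. -/
lemma no_run_of_loop {A : FOStruct} {M : Machine A} {c h : Config A} (hd : DStep M c c)
    (hh : Halted M h) : ∀ n, ¬ Run M n c h := by
  intro n
  induction n using Nat.strong_induction_on with
  | _ n ih =>
    intro hr
    obtain ⟨m, hm, hr⟩ := hd.run hh hr
    exact ih m hm hr

lemma reaches_of_dreach {A : FOStruct} {M : Machine A} {c d : Config A}
    (hd : Relation.ReflTransGen (DStep M) c d) : Reaches M c d := by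
  induction hd with
  | refl => exact .refl
  | tail _ h ih => exact .tail ih ((h _).2 rfl)

lemma dstep {A : FOStruct} {M : Machine A} {c : Config A} (ins : Instr A)
    (h : M.prog[c.label]? = some ins) (hdet : ins.isDet) : DStep M c (execDet ins c) := by
  intro x
  constructor
  · rintro ⟨ins', h', hx⟩
    rw [h] at h'
    cases h'
    cases ins <;> first | exact hx | exact hdet.elim
  · rintro rfl
    refine ⟨ins, h, ?_⟩
    cases ins <;> first | rfl | exact hdet.elim

lemma DR.refl {A : FOStruct} {M : Machine A} {c : Config A} {Q : Config A → Prop} (h : Q c) :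
    DR M c Q := ⟨c, .refl, h⟩

lemma DR.head {A : FOStruct} {M : Machine A} {c d : Config A} {Q : Config A → Prop}
    (h : DStep M c d) (hd : DR M d Q) : DR M c Q := by
  obtain ⟨e, he, hq⟩ := hd
  exact ⟨e, .head h he, hq⟩

lemma DR.const {A : FOStruct} {M : Machine A} {l : ℕ} {f : ℕ → ℕ} {g : ℕ → A.U}
    {Q : Config A → Prop} {j : ℕ} {i : A.constIdx} (h : M.prog[l]? = some (.const j i))
    (hd : DR M ⟨l + 1, f, Function.update g j (A.consts i)⟩ Q) : DR M ⟨l, f, g⟩ Q :=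
  DR.head (dstep _ h trivial) hd

lemma DR.copy {A : FOStruct} {M : Machine A} {l : ℕ} {f : ℕ → ℕ} {g : ℕ → A.U}
    {Q : Config A → Prop} {j k : ℕ} (h : M.prog[l]? = some (.copy j k))
    (hd : DR M ⟨l + 1, f, Function.update g (f j) (g (f k))⟩ Q) : DR M ⟨l, f, g⟩ Q :=
  DR.head (dstep _ h trivial) hd

lemma DR.inc {A : FOStruct} {M : Machine A} {l : ℕ} {f : ℕ → ℕ} {g : ℕ → A.U}
    {Q : Config A → Prop} {j : ℕ} (h : M.prog[l]? = some (.incIdx j))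
    (hd : DR M ⟨l + 1, Function.update f j (f j + 1), g⟩ Q) : DR M ⟨l, f, g⟩ Q :=
  DR.head (dstep _ h trivial) hd

lemma DR.reset {A : FOStruct} {M : Machine A} {l : ℕ} {f : ℕ → ℕ} {g : ℕ → A.U}
    {Q : Config A → Prop} {j : ℕ} (h : M.prog[l]? = some (.resetIdx j))
    (hd : DR M ⟨l + 1, Function.update f j 1, g⟩ Q) : DR M ⟨l, f, g⟩ Q :=
  DR.head (dstep _ h trivial) hd

lemma DR.idx_eq {A : FOStruct} {M : Machine A} {l : ℕ} {f : ℕ → ℕ} {g : ℕ → A.U}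
    {Q : Config A → Prop} {j k l₁ l₂ : ℕ} (h : M.prog[l]? = some (.branchIdx j k l₁ l₂))
    (he : f j = f k) (hd : DR M ⟨l₁, f, g⟩ Q) : DR M ⟨l, f, g⟩ Q :=
  DR.head (dstep _ h trivial) (by simpa [execDet, he] using hd)

lemma DR.idx_ne {A : FOStruct} {M : Machine A} {l : ℕ} {f : ℕ → ℕ} {g : ℕ → A.U}
    {Q : Config A → Prop} {j k l₁ l₂ : ℕ} (h : M.prog[l]? = some (.branchIdx j k l₁ l₂))
    (he : f j ≠ f k) (hd : DR M ⟨l₂, f, g⟩ Q) : DR M ⟨l, f, g⟩ Q :=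
  DR.head (dstep _ h trivial) (by simpa [execDet, he] using hd)

lemma DR.rel_pos {A : FOStruct} {M : Machine A} {l : ℕ} {f : ℕ → ℕ} {g : ℕ → A.U}
    {Q : Config A → Prop} {i : A.relIdx} {args : List ℕ} {l₁ l₂ : ℕ}
    (h : M.prog[l]? = some (.branchRel i args l₁ l₂))
    (he : A.rels i (args.map g)) (hd : DR M ⟨l₁, f, g⟩ Q) : DR M ⟨l, f, g⟩ Q :=
  DR.head (dstep _ h trivial) (by simpa only [execDet, if_pos he] using hd)

lemma DR.rel_neg {A : FOStruct} {M : Machine A} {l : ℕ} {f : ℕ → ℕ} {g : ℕ → A.U}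
    {Q : Config A → Prop} {i : A.relIdx} {args : List ℕ} {l₁ l₂ : ℕ}
    (h : M.prog[l]? = some (.branchRel i args l₁ l₂))
    (he : ¬ A.rels i (args.map g)) (hd : DR M ⟨l₂, f, g⟩ Q) : DR M ⟨l, f, g⟩ Q :=
  DR.head (dstep _ h trivial) (by simpa only [execDet, if_neg he] using hd)

/-- Unconditional jump. -/
def goto {A : FOStruct} (l : ℕ) : Instr A := .branchIdx 0 0 l l

lemma DR.goto {A : FOStruct} {M : Machine A} {l L : ℕ} {f : ℕ → ℕ} {g : ℕ → A.U}
    {Q : Config A → Prop} (h : M.prog[l]? = some (goto L))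
    (hd : DR M ⟨L, f, g⟩ Q) : DR M ⟨l, f, g⟩ Q :=
  DR.idx_eq h rfl hd

/-! ### Coding register contents in an index register -/

open scoped Classical in
/-- The ternary digit recording which of the two constants `u` is, if any. -/
noncomputable def dig {U : Type} (a₁ a₂ u : U) : ℕ := if u = a₁ then 1 else if u = a₂ then 2 else 0

/-- The code of the digits of `g 3, …, g (m + 2)`, a base-3 number shifted so as to be positive,
since index registers are reset to `1`. -/
noncomputable def code {U : Type} (a₁ a₂ : U) (g : ℕ → U) : ℕ → ℕ
  | 0 => 1
  | m + 1 => 3 * code a₁ a₂ g m - 2 + dig a₁ a₂ (g (m + 3))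

lemma dig_le {U : Type} (a₁ a₂ u : U) : dig a₁ a₂ u ≤ 2 := by
  unfold dig; split_ifs <;> omega

lemma one_le_code {U : Type} (a₁ a₂ : U) (g : ℕ → U) (m : ℕ) : 1 ≤ code a₁ a₂ g m := by
  induction m with
  | zero => exact le_rfl
  | succ m ih => rw [code]; omega

lemma code_congr {U : Type} {a₁ a₂ : U} {g g' : ℕ → U} (m : ℕ)
    (h : ∀ i, 3 ≤ i → g i = g' i) : code a₁ a₂ g m = code a₁ a₂ g' m := by
  induction m with
  | zero => rfl
  | succ m ih => rw [code, code, ih, h (m + 3) (by omega)]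

lemma dig_eq_of_code_eq {U : Type} {a₁ a₂ : U} {g g' : ℕ → U} (m : ℕ)
    (h : code a₁ a₂ g m = code a₁ a₂ g' m) :
    ∀ i < m, dig a₁ a₂ (g (i + 3)) = dig a₁ a₂ (g' (i + 3)) := by
  induction m with
  | zero => intro i hi; omega
  | succ m ih =>
    rw [code, code] at h
    have h1 := one_le_code a₁ a₂ g m
    have h2 := one_le_code a₁ a₂ g' m
    have h3 := dig_le a₁ a₂ (g (m + 3))
    have h4 := dig_le a₁ a₂ (g' (m + 3))
    intro i hi
    rcases Nat.lt_succ_iff_lt_or_eq.1 hi with h5 | rfl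
    · exact ih (by omega) i h5
    · omega

/-- If a register either kept its value or received one of the two constants, then its digit
determines its value. -/
lemma eq_of_dig_eq {U : Type} {a₁ a₂ u v : U} (hne : a₁ ≠ a₂) (h : dig a₁ a₂ u = dig a₁ a₂ v)
    (hv : v = u ∨ v = a₁ ∨ v = a₂) : v = u := by
  unfold dig at h
  rcases hv with hv | rfl | rfl
  · exact hv
  · split_ifs at h <;> simp_all
  · split_ifs at h <;> simp_all

/-- The subprogram, starting at label `o`, that leaves the code of the registers
`3, …, P + 2` in index register `e`, where `P + 2` is the value of index register `b + 2`; it uses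
the registers `1, 2` and the index registers `b + 5, b + 6, b + 7` as work space. -/
def enc {A : FOStruct} (i₁ i₂ : A.constIdx) (r : A.relIdx) (b e o : ℕ) : ℕ → Instr A
  | 0 => .resetIdx e
  | 1 => .resetIdx (b + 5)
  | 2 => .incIdx (b + 5)
  | 3 => .branchIdx (b + 5) (b + 2) (o + 24) (o + 4)
  | 4 => .incIdx (b + 5)
  | 5 => .copy (b + 4) (b + 5)
  | 6 => .resetIdx (b + 6)
  | 7 => .resetIdx (b + 7)
  | 8 => .branchIdx (b + 6) e (o + 14) (o + 9)
  | 9 => .incIdx (b + 6)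
  | 10 => .incIdx (b + 7)
  | 11 => .incIdx (b + 7)
  | 12 => .incIdx (b + 7)
  | 13 => goto (o + 8)
  | 14 => .const 1 i₁
  | 15 => .branchRel r [2, 1] (o + 19) (o + 16)
  | 16 => .const 1 i₂
  | 17 => .branchRel r [2, 1] (o + 18) (o + 20)
  | 18 => .incIdx (b + 7)
  | 19 => .incIdx (b + 7)
  | 20 => .resetIdx e
  | 21 => .branchIdx e (b + 7) (o + 3) (o + 22)
  | 22 => .incIdx e
  | _ => goto (o + 21)

section Enc

variable {A : FOStruct} {M : Machine A} {i₁ i₂ : A.constIdx} {r : A.relIdx} {b e o : ℕ}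
  {Q : Config A → Prop}

lemma enc_mul (hp : ∀ k < 24, M.prog[o + k]? = some (enc i₁ i₂ r b e o k)) (he : b + 9 ≤ e)
    (g : ℕ → A.U) (d : ℕ) : ∀ f : ℕ → ℕ, f (b + 6) + d = f e →
    (∀ f' : ℕ → ℕ, f' (b + 7) = f (b + 7) + 3 * d →
      (∀ j, j ≠ b + 6 → j ≠ b + 7 → f' j = f j) → DR M ⟨o + 14, f', g⟩ Q) →
    DR M ⟨o + 8, f, g⟩ Q := by
  have e6 : e ≠ b + 6 := by omega
  have e7 : e ≠ b + 7 := by omega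
  induction d with
  | zero =>
    intro f hf hk
    exact DR.idx_eq (hp 8 (by norm_num)) hf (hk f rfl fun _ _ _ => rfl)
  | succ d ih =>
    intro f hf hk
    refine DR.idx_ne (hp 8 (by norm_num)) (by omega) ?_
    refine DR.inc (hp 9 (by norm_num)) ?_
    refine DR.inc (hp 10 (by norm_num)) ?_
    refine DR.inc (hp 11 (by norm_num)) ?_
    refine DR.inc (hp 12 (by norm_num)) ?_
    refine DR.goto (hp 13 (by norm_num)) ?_
    refine ih _ ?_ ?_
    · simp [e6, e7]; omega
    · intro f' h7 hfr
      refine hk f' ?_ ?_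
      · rw [h7]; simp; omega
      · intro j h6 h7
        rw [hfr j h6 h7]
        simp [h6, h7]

lemma enc_transfer (hp : ∀ k < 24, M.prog[o + k]? = some (enc i₁ i₂ r b e o k)) (he : b + 9 ≤ e)
    (g : ℕ → A.U) (d : ℕ) : ∀ f : ℕ → ℕ, f e + d = f (b + 7) →
    (∀ f' : ℕ → ℕ, f' e = f (b + 7) → (∀ j, j ≠ e → f' j = f j) → DR M ⟨o + 3, f', g⟩ Q) →
    DR M ⟨o + 21, f, g⟩ Q := by
  have e7 : b + 7 ≠ e := by omega
  induction d with
  | zero =>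
    intro f hf hk
    exact DR.idx_eq (hp 21 (by norm_num)) hf (hk f hf fun _ _ => rfl)
  | succ d ih =>
    intro f hf hk
    refine DR.idx_ne (hp 21 (by norm_num)) (by omega) ?_
    refine DR.inc (hp 22 (by norm_num)) ?_
    refine DR.goto (hp 23 (by norm_num)) ?_
    refine ih _ ?_ ?_
    · simp [e7]; omega
    · intro f' h1 hfr
      refine hk f' ?_ ?_
      · rw [h1]; simp [e7]
      · intro j h
        rw [hfr j h]
        simp [h]

/-- Appending the digit of register 2 to the number `3e - 2` held in index register `b + 7`. -/
lemma enc_digit (hp : ∀ k < 24, M.prog[o + k]? = some (enc i₁ i₂ r b e o k))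
    (hr : ∀ x y : A.U, A.rels r [x, y] ↔ x = y) (f : ℕ → ℕ) (g : ℕ → A.U)
    (hk : ∀ (f' : ℕ → ℕ) (g' : ℕ → A.U),
      f' (b + 7) = f (b + 7) + dig (A.consts i₁) (A.consts i₂) (g 2) →
      (∀ j, j ≠ b + 7 → f' j = f j) → (∀ i, i ≠ 1 → g' i = g i) → DR M ⟨o + 20, f', g'⟩ Q) :
    DR M ⟨o + 14, f, g⟩ Q := by
  refine DR.const (hp 14 (by norm_num)) ?_
  by_cases h1 : g 2 = A.consts i₁
  · refine DR.rel_pos (hp 15 (by norm_num)) ?_ ?_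
    · simp [hr, h1]
    refine DR.inc (hp 19 (by norm_num)) ?_
    refine hk _ _ ?_ ?_ ?_
    · simp [dig, h1]
    · intro j hj; simp [hj]
    · intro j hj; simp [hj]
  refine DR.rel_neg (hp 15 (by norm_num)) ?_ ?_
  · simp [hr, h1]
  refine DR.const (hp 16 (by norm_num)) ?_
  by_cases h2 : g 2 = A.consts i₂
  · refine DR.rel_pos (hp 17 (by norm_num)) ?_ ?_
    · simp [hr, h2]
    refine DR.inc (hp 18 (by norm_num)) ?_
    refine DR.inc (hp 19 (by norm_num)) ?_
    refine hk _ _ ?_ ?_ ?_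
    · have h3 : A.consts i₂ ≠ A.consts i₁ := by rw [← h2]; exact h1
      simp [dig, h2, h3]
    · intro j hj; simp [hj]
    · intro j hj; simp [hj]
  · refine DR.rel_neg (hp 17 (by norm_num)) ?_ ?_
    · simp [hr, h2]
    refine hk _ _ ?_ ?_ ?_
    · simp [dig, h1, h2]
    · intro j hj; rfl
    · intro j hj; simp [hj]

lemma enc_loop (hp : ∀ k < 24, M.prog[o + k]? = some (enc i₁ i₂ r b e o k)) (he : b + 9 ≤ e)
    (hr : ∀ x y : A.U, A.rels r [x, y] ↔ x = y) (N d : ℕ) :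
    ∀ (m : ℕ) (f : ℕ → ℕ) (g : ℕ → A.U), m + d = N → f (b + 5) = m + 2 → f (b + 2) = N + 2 →
    f (b + 4) = 2 → f e = code (A.consts i₁) (A.consts i₂) g m →
    (∀ (f' : ℕ → ℕ) (g' : ℕ → A.U), f' e = code (A.consts i₁) (A.consts i₂) g N →
      (∀ j, j ≠ e → j ≠ b + 5 → j ≠ b + 6 → j ≠ b + 7 → f' j = f j) →
      (∀ i, i ≠ 1 → i ≠ 2 → g' i = g i) → DR M ⟨o + 24, f', g'⟩ Q) →
    DR M ⟨o + 3, f, g⟩ Q := by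
  have e2 : e ≠ b + 2 := by omega
  have e4 : e ≠ b + 4 := by omega
  have e5 : e ≠ b + 5 := by omega
  have e6 : e ≠ b + 6 := by omega
  have e7 : e ≠ b + 7 := by omega
  induction d with
  | zero =>
    intro m f g hm h5 h2 h4 hE hk
    obtain rfl : m = N := by omega
    exact DR.idx_eq (hp 3 (by norm_num)) (by omega)
      (hk f g hE (fun _ _ _ _ _ => rfl) fun _ _ _ => rfl)
  | succ d ih =>
    intro m f g hm h5 h2 h4 hE hk
    have hc := one_le_code (A.consts i₁) (A.consts i₂) g m
    refine DR.idx_ne (hp 3 (by norm_num)) (by omega) ?_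
    refine DR.inc (hp 4 (by norm_num)) ?_
    refine DR.copy (hp 5 (by norm_num)) ?_
    refine DR.reset (hp 6 (by norm_num)) ?_
    refine DR.reset (hp 7 (by norm_num)) ?_
    refine enc_mul hp he _ (f e - 1) _ ?_ ?_
    · simp [e5, e6, e7]; omega
    intro f1 k7 kf
    refine enc_digit hp hr _ _ ?_
    intro f2 g2 k7' kf' kg
    refine DR.reset (hp 20 (by norm_num)) ?_
    have v7 : f2 (b + 7) = code (A.consts i₁) (A.consts i₂) g (m + 1) := by
      rw [k7', k7, code]; simp [h4, h5]; omega
    have hc' := one_le_code (A.consts i₁) (A.consts i₂) g (m + 1)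
    refine enc_transfer hp he _ (f2 (b + 7) - 1) _ ?_ ?_
    · simp [Ne.symm e7]; omega
    intro f3 k3 kf3
    have hg : ∀ i, i ≠ 1 → i ≠ 2 → g2 i = g i := by
      intro i hi1 hi2
      rw [kg i hi1]; simp [h4, hi2]
    have hcong : ∀ n, code (A.consts i₁) (A.consts i₂) g2 n
        = code (A.consts i₁) (A.consts i₂) g n := fun n =>
      code_congr n fun i hi => hg i (by omega) (by omega)
    have hf : ∀ j, j ≠ e → j ≠ b + 5 → j ≠ b + 6 → j ≠ b + 7 → f3 j = f j := by
      intro j j1 j5 j6 j7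
      rw [kf3 j j1, Function.update_of_ne j1, kf' j j7, kf j j6 j7]
      simp [j5, j6, j7]
    refine ih (m + 1) f3 g2 (by omega) ?_ ?_ ?_ ?_ ?_
    · rw [kf3 _ (Ne.symm e5), Function.update_of_ne (Ne.symm e5), kf' _ (by omega),
        kf _ (by omega) (by omega)]
      simp [h5]
    · rw [hf] <;> omega
    · rw [hf] <;> omega
    · rw [k3, Function.update_of_ne (Ne.symm e7), v7, hcong]
    · intro f' g' q1 q2 q3
      refine hk f' g' (by rw [q1, hcong]) ?_ ?_
      · intro j j1 j5 j6 j7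
        rw [q2 j j1 j5 j6 j7, hf j j1 j5 j6 j7]
      · intro i j1 j2
        rw [q3 i j1 j2, hg i j1 j2]

lemma enc_spec (hp : ∀ k < 24, M.prog[o + k]? = some (enc i₁ i₂ r b e o k)) (he : b + 9 ≤ e)
    (hr : ∀ x y : A.U, A.rels r [x, y] ↔ x = y) (N : ℕ)
    (f : ℕ → ℕ) (g : ℕ → A.U) (h2 : f (b + 2) = N + 2) (h4 : f (b + 4) = 2)
    (hk : ∀ (f' : ℕ → ℕ) (g' : ℕ → A.U), f' e = code (A.consts i₁) (A.consts i₂) g N →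
      (∀ j, j ≠ e → j ≠ b + 5 → j ≠ b + 6 → j ≠ b + 7 → f' j = f j) →
      (∀ i, i ≠ 1 → i ≠ 2 → g' i = g i) → DR M ⟨o + 24, f', g'⟩ Q) :
    DR M ⟨o, f, g⟩ Q := by
  have e2 : b + 2 ≠ e := by omega
  have e4 : b + 4 ≠ e := by omega
  have e5 : e ≠ b + 5 := by omega
  refine DR.reset (hp 0 (by norm_num)) ?_
  refine DR.reset (hp 1 (by norm_num)) ?_
  refine DR.inc (hp 2 (by norm_num)) ?_
  refine enc_loop hp he hr N N 0 _ g (by omega) ?_ ?_ ?_ ?_ ?_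
  · simp
  · simp [e2, h2]
  · simp [e4, h4]
  · simp [e5, code]
  · intro f' g' q1 q2 q3
    refine hk f' g' q1 ?_ q3
    intro j j1 j5 j6 j7
    rw [q2 j j1 j5 j6 j7]
    simp [j1, j5]

end Enc

/-! ### The simulating machine -/

/-- The block simulating `goto l₁ or goto l₂`, starting at label `o`. -/
def orBlk {A : FOStruct} (i₁ i₂ : A.constIdx) (r : A.relIdx) (b o L₁ L₂ k : ℕ) : Instr A :=
  if k < 2 then (if k = 0 then .copy (b + 1) (b + 3) else .copy (b + 2) (b + 4))
  else if k < 26 then enc i₁ i₂ r b (b + 9) (o + 2) (k - 2)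
  else if k < 31 then
    (if k = 26 then .nuGuess 1 else if k = 27 then .resetIdx (b + 8)
      else if k = 28 then .const 2 i₁ else if k = 29 then .branchRel r [1, 2] (o + 31) (o + 30)
      else .incIdx (b + 8))
  else if k < 55 then enc i₁ i₂ r b (b + 10) (o + 31) (k - 31)
  else if k = 55 then .branchIdx (b + 9) (b + 10) (o + 56) (o + 55)
  else if k = 56 then .copy (b + 3) (b + 1)
  else if k = 57 then .copy (b + 4) (b + 2)
  else .branchIdx (b + 8) (b + 3) L₁ L₂

/-- The block simulating the instruction `ins` with label `l`; label `l` of the simulated machine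
corresponds to the block start `S * (l + 1)`. -/
def blk {A : FOStruct} (i₁ i₂ : A.constIdx) (r : A.relIdx) (b S l : ℕ) (ins : Instr A) (k : ℕ) :
    Instr A :=
  match ins with
  | .branchRel i args l₁ l₂ => .branchRel i args (S * (l₁ + 1)) (S * (l₂ + 1))
  | .branchIdx i j l₁ l₂ => .branchIdx i j (S * (l₁ + 1)) (S * (l₂ + 1))
  | .incIdx j =>
      if k = 0 then .copy (b + 1) b else if k = 1 then .incIdx b
      else if k = 2 then .incIdx (b + 1) else if k = 3 then .incIdx (b + 2)
      else if k = 4 then .incIdx j else goto (S * (l + 2))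
  | .orGoto l₁ l₂ => orBlk i₁ i₂ r b (S * (l + 1)) (S * (l₁ + 1)) (S * (l₂ + 1)) k
  | ins => if k = 0 then ins else goto (S * (l + 2))

/-- The initial block, which sets the index registers `b, b + 1, b + 2` to `n + b` and the next two
numbers, `n` being the length of the input, and index register `b + 4` to `2`. -/
def setup {A : FOStruct} (b S k : ℕ) : Instr A :=
  if k < b then .incIdx b
  else match k - b with
    | 0 => .branchIdx (b + 6) 1 (b + 4) (b + 1)
    | 1 => .incIdx (b + 6)
    | 2 => .incIdx b
    | 3 => goto b
    | 4 => .branchIdx (b + 1) b (b + 8) (b + 5)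
    | 5 => .incIdx (b + 1)
    | 6 => .incIdx (b + 2)
    | 7 => goto (b + 4)
    | 8 => .incIdx (b + 1)
    | 9 => .incIdx (b + 2)
    | 10 => .incIdx (b + 2)
    | 11 => .incIdx (b + 4)
    | _ => goto S

/-- The instruction with label `x` of the simulating machine. -/
def instrAt {A : FOStruct} (i₁ i₂ : A.constIdx) (r : A.relIdx) (b S : ℕ) (p : List (Instr A))
    (x : ℕ) : Instr A :=
  if x < S then setup b S x
  else match p[x / S - 1]? with
    | some ins => blk i₁ i₂ r b S (x / S - 1) ins (x % S)
    | none => goto 0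

/-- The ν-oracle machine simulating the program `p` with oracle `O`. -/
def sim {A : FOStruct} (i₁ i₂ : A.constIdx) (r : A.relIdx) (b S : ℕ) (p : List (Instr A))
    (O : Set (Tup A)) : Machine A :=
  ⟨(List.range (S * (p.length + 1))).map (instrAt i₁ i₂ r b S p), O⟩

lemma enc_noOr {A : FOStruct} (i₁ i₂ : A.constIdx) (r : A.relIdx) (b e o k : ℕ) :
    (enc i₁ i₂ r b e o k).noOr := by
  unfold enc; split <;> trivial

lemma orBlk_noOr {A : FOStruct} (i₁ i₂ : A.constIdx) (r : A.relIdx) (b o L₁ L₂ k : ℕ) :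
    (orBlk i₁ i₂ r b o L₁ L₂ k).noOr := by
  unfold orBlk; split_ifs <;> first | trivial | exact enc_noOr ..

lemma blk_noOr {A : FOStruct} (i₁ i₂ : A.constIdx) (r : A.relIdx) (b S l : ℕ) (ins : Instr A)
    (k : ℕ) : (blk i₁ i₂ r b S l ins k).noOr := by
  unfold blk; cases ins <;> dsimp only <;> (try split_ifs) <;>
    first | trivial | exact orBlk_noOr ..

lemma setup_noOr {A : FOStruct} (b S k : ℕ) : (setup b S k : Instr A).noOr := by
  unfold setup; split_ifs
  · trivial
  · split <;> trivial

lemma sim_nuMach {A : FOStruct} (i₁ i₂ : A.constIdx) (r : A.relIdx) (b S : ℕ) (p : List (Instr A))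
    (O : Set (Tup A)) : (sim i₁ i₂ r b S p O).NuMach O := by
  refine ⟨?_, rfl⟩
  intro ins h
  obtain ⟨x, -, rfl⟩ := List.mem_map.1 h
  unfold instrAt
  split_ifs
  · exact setup_noOr ..
  · split
    · exact blk_noOr ..
    · trivial

lemma sim_setup {A : FOStruct} {i₁ i₂ : A.constIdx} {r : A.relIdx} {b S : ℕ} {p : List (Instr A)}
    {O : Set (Tup A)} {k : ℕ} (hk : k < S) :
    (sim i₁ i₂ r b S p O).prog[k]? = some (setup b S k) := by
  have : k < S * (p.length + 1) := by nlinarith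
  simp [sim, this, instrAt, hk]

lemma sim_blk {A : FOStruct} {i₁ i₂ : A.constIdx} {r : A.relIdx} {b S : ℕ} {p : List (Instr A)}
    {O : Set (Tup A)} {l k : ℕ} {ins : Instr A} (h : p[l]? = some ins) (hk : k < S) :
    (sim i₁ i₂ r b S p O).prog[S * (l + 1) + k]? = some (blk i₁ i₂ r b S l ins k) := by
  obtain ⟨hl, -⟩ := List.getElem?_eq_some_iff.1 h
  have h1 : S * (l + 1) + k < S * (p.length + 1) := by nlinarith
  have h2 : ¬ (S * (l + 1) + k < S) := by nlinarith
  have h3 : (S * (l + 1) + k) / S = l + 1 := by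
    rw [Nat.mul_add_div (by omega), Nat.div_eq_of_lt hk, Nat.add_zero]
  have h4 : (S * (l + 1) + k) % S = k := by
    rw [Nat.mul_add_mod, Nat.mod_eq_of_lt hk]
  simp [sim, h1, instrAt, h2, h3, h4, h]

/-- All register and index-register numbers occurring in the instruction are less than `b`. -/
def Bdd {A : FOStruct} (b : ℕ) : Instr A → Prop
  | .apply j _ args => j < b ∧ ∀ a ∈ args, a < b
  | .const j _ => j < b
  | .copy j k => j < b ∧ k < b
  | .branchRel _ args _ _ => ∀ a ∈ args, a < b
  | .branchIdx j k _ _ => j < b ∧ k < b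
  | .incIdx j => j < b
  | .resetIdx j => j < b
  | .orGoto _ _ => True
  | .nuGuess _ => True

lemma Bdd.mono {A : FOStruct} {b b' : ℕ} (h : b ≤ b') {ins : Instr A} (hb : Bdd b ins) :
    Bdd b' ins := by
  cases ins <;> simp only [Bdd] at hb ⊢ <;>
    first
    | omega
    | exact ⟨by omega, fun a ha => (hb.2 a ha).trans_le h⟩
    | exact fun a ha => (hb a ha).trans_le h

lemma exists_bdd_instr {A : FOStruct} (ins : Instr A) : ∃ b, Bdd b ins := by
  have key : ∀ args : List ℕ, ∃ b, ∀ a ∈ args, a < b := by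
    intro args
    refine ⟨args.sum + 1, fun a ha => ?_⟩
    have := List.le_sum_of_mem ha
    omega
  cases ins with
  | apply j i args =>
    obtain ⟨b, hb⟩ := key args
    exact ⟨b + j + 1, by omega, fun a ha => by have := hb a ha; omega⟩
  | branchRel i args l₁ l₂ => exact key args
  | const j i => exact ⟨j + 1, Nat.lt_succ_self j⟩
  | copy j k => exact ⟨j + k + 1, by omega, by omega⟩
  | branchIdx j k l₁ l₂ => exact ⟨j + k + 1, by omega, by omega⟩
  | incIdx j => exact ⟨j + 1, Nat.lt_succ_self j⟩
  | resetIdx j => exact ⟨j + 1, Nat.lt_succ_self j⟩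
  | orGoto _ _ => exact ⟨0, trivial⟩
  | nuGuess _ => exact ⟨0, trivial⟩

lemma exists_bdd {A : FOStruct} (p : List (Instr A)) : ∃ b, 3 ≤ b ∧ ∀ ins ∈ p, Bdd b ins := by
  induction p with
  | nil => exact ⟨3, le_rfl, by simp⟩
  | cons a p ih =>
    obtain ⟨b, hb, h⟩ := ih
    obtain ⟨b', h'⟩ := exists_bdd_instr a
    refine ⟨b + b', by omega, ?_⟩
    intro ins hi
    rcases List.mem_cons.1 hi with rfl | hi
    · exact h'.mono (by omega)
    · exact (h ins hi).mono (by omega)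

/-- The simulation relation between a configuration `c` of the simulated machine and one `c'` of
the simulating machine. Index register `b` holds a bound `P` for everything `c` can address;
`c` has the same value in all registers from `P` on, and only the registers up to `P` need to
agree, as those above `P` may have been overwritten by guesses. -/
structure Rel {A : FOStruct} (b S : ℕ) (c c' : Config A) : Prop where
  label : c'.label = S * (c.label + 1)
  idx : ∀ j < b, c'.idx j = c.idx j
  idx_lt : ∀ j < b, c.idx j < c'.idx b
  le_P : b ≤ c'.idx b
  p1 : c'.idx (b + 1) = c'.idx b + 1
  p2 : c'.idx (b + 2) = c'.idx b + 2
  s1 : c'.idx (b + 3) = 1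
  s2 : c'.idx (b + 4) = 2
  reg : ∀ i ≤ c'.idx b, c'.reg i = c.reg i
  fill : ∀ i, c'.idx b ≤ i → c.reg i = c.reg (c'.idx b)

lemma Rel.output_eq {A : FOStruct} {b S : ℕ} {c c' : Config A} (hb : 3 ≤ b) (h : Rel b S c c') :
    output c' = output c := by
  apply Subtype.ext
  simp only [output]
  rw [h.idx 1 (by omega)]
  apply List.map_congr_left
  intro i hi
  have h1 := h.idx_lt 1 (by omega)
  have h2 := h.le_P
  have h3 := List.mem_range.1 hi
  exact h.reg i (by omega)

lemma rel_halted_iff {A : FOStruct} {i₁ i₂ : A.constIdx} {r : A.relIdx} {b S : ℕ} {M : Machine A}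
    {O : Set (Tup A)} {c c' : Config A} (hS : 0 < S) (h : Rel b S c c') :
    Halted (sim i₁ i₂ r b S M.prog O) c' ↔ Halted M c := by
  simp [Halted, sim, h.label, hS]

section Setup

variable {A : FOStruct} {M : Machine A} {b S : ℕ} {Q : Config A → Prop}

lemma setup_incs (hp : ∀ k < b + 13, M.prog[k]? = some (setup b S k)) (g : ℕ → A.U) (d : ℕ) :
    ∀ (k : ℕ) (f : ℕ → ℕ), k + d = b →
    (∀ f' : ℕ → ℕ, f' b = f b + d → (∀ j, j ≠ b → f' j = f j) → DR M ⟨b, f', g⟩ Q) →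
    DR M ⟨k, f, g⟩ Q := by
  induction d with
  | zero =>
    intro k f hd hk
    obtain rfl : k = b := by omega
    exact hk f rfl fun _ _ => rfl
  | succ d ih =>
    intro k f hd hk
    refine DR.inc (j := b) ?_ ?_
    · rw [hp k (by omega)]
      simp [setup, show k < b by omega]
    refine ih (k + 1) _ (by omega) ?_
    intro f' h1 h2
    refine hk f' ?_ ?_
    · rw [h1]; simp; omega
    · intro j hj; rw [h2 j hj]; simp [hj]

lemma setup_at (hp : ∀ k < b + 13, M.prog[k]? = some (setup b S k)) (k : ℕ) (hk : k < 13) :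
    M.prog[b + k]? = some (setup b S (b + k)) := hp _ (by omega)

lemma setup_len (hp : ∀ k < b + 13, M.prog[k]? = some (setup b S k)) (hb : 3 ≤ b)
    (g : ℕ → A.U) (d : ℕ) : ∀ f : ℕ → ℕ, f (b + 6) + d = f 1 →
    (∀ f' : ℕ → ℕ, f' b = f b + d → (∀ j, j ≠ b → j ≠ b + 6 → f' j = f j) →
      DR M ⟨b + 4, f', g⟩ Q) →
    DR M ⟨b, f, g⟩ Q := by
  have hi : ∀ k < 13, M.prog[b + k]? = some (setup b S (b + k)) := setup_at hp
  simp only [setup, Nat.not_lt.2 (Nat.le_add_right b _), if_false, Nat.add_sub_cancel_left] at hi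
  have n1 : (1 : ℕ) ≠ b := by omega
  have n2 : (1 : ℕ) ≠ b + 6 := by omega
  induction d with
  | zero =>
    intro f hf hk
    exact DR.idx_eq (hi 0 (by norm_num)) hf (hk f rfl fun _ _ _ => rfl)
  | succ d ih =>
    intro f hf hk
    refine DR.idx_ne (hi 0 (by norm_num)) (by omega) ?_
    refine DR.inc (hi 1 (by norm_num)) ?_
    refine DR.inc (hi 2 (by norm_num)) ?_
    refine DR.goto (hi 3 (by norm_num)) ?_
    refine ih _ ?_ ?_
    · simp [n1]; omega
    · intro f' h1 h2
      refine hk f' ?_ ?_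
      · rw [h1]; simp; omega
      · intro j hj hj'; rw [h2 j hj hj']; simp [hj, hj']

lemma setup_top (hp : ∀ k < b + 13, M.prog[k]? = some (setup b S k))
    (g : ℕ → A.U) (d : ℕ) : ∀ f : ℕ → ℕ, f (b + 1) + d = f b →
    (∀ f' : ℕ → ℕ, f' (b + 1) = f (b + 1) + d → f' (b + 2) = f (b + 2) + d →
      (∀ j, j ≠ b + 1 → j ≠ b + 2 → f' j = f j) → DR M ⟨b + 8, f', g⟩ Q) →
    DR M ⟨b + 4, f, g⟩ Q := by
  have hi : ∀ k < 13, M.prog[b + k]? = some (setup b S (b + k)) := setup_at hp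
  simp only [setup, Nat.not_lt.2 (Nat.le_add_right b _), if_false, Nat.add_sub_cancel_left] at hi
  induction d with
  | zero =>
    intro f hf hk
    exact DR.idx_eq (hi 4 (by norm_num)) hf (hk f rfl rfl fun _ _ _ => rfl)
  | succ d ih =>
    intro f hf hk
    refine DR.idx_ne (hi 4 (by norm_num)) (by omega) ?_
    refine DR.inc (hi 5 (by norm_num)) ?_
    refine DR.inc (hi 6 (by norm_num)) ?_
    refine DR.goto (hi 7 (by norm_num)) ?_
    refine ih _ ?_ ?_
    · simp; omega
    · intro f' h1 h2 h3
      refine hk f' ?_ ?_ ?_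
      · rw [h1]; simp; omega
      · rw [h2]; simp; omega
      · intro j hj hj'; rw [h3 j hj hj']; simp [hj, hj']

lemma setup_spec (hp : ∀ k < b + 13, M.prog[k]? = some (setup b S k)) (hb : 3 ≤ b) (x : Tup A) :
    DR M (inputConfig A x) (Rel b S (inputConfig A x)) := by
  have hi : ∀ k < 13, M.prog[b + k]? = some (setup b S (b + k)) := setup_at hp
  simp only [setup, Nat.not_lt.2 (Nat.le_add_right b _), if_false, Nat.add_sub_cancel_left] at hi
  have hx : 1 ≤ x.1.length := List.length_pos_iff.2 x.2
  set c := inputConfig A x with hc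
  have c1 : c.idx 1 = x.1.length := by simp [hc, inputConfig]
  have cj : ∀ j, j ≠ 1 → c.idx j = 1 := by intro j hj; simp [hc, inputConfig, hj]
  have creg : ∀ i, x.1.length ≤ i → c.reg i = x.1.getLast x.2 := by
    intro i hi; simp [hc, inputConfig, List.getD, List.getElem?_eq_none hi]
  change DR M ⟨0, c.idx, c.reg⟩ _
  refine setup_incs hp _ b 0 _ (by omega) ?_
  intro f1 p1 q1
  refine setup_len hp hb _ (x.1.length - 1) _ ?_ ?_
  · rw [q1 _ (by omega), q1 _ (by omega), c1, cj _ (by omega)]; omega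
  intro f2 p2 q2
  have v2 : f2 b = b + x.1.length := by rw [p2, p1, cj b (by omega)]; omega
  refine setup_top hp _ (f2 b - 1) _ ?_ ?_
  · rw [q2 (b + 1) (by omega) (by omega), q1 _ (by omega), cj _ (by omega)]; omega
  intro f3 p3 p3' q3
  refine DR.inc (hi 8 (by norm_num)) ?_
  refine DR.inc (hi 9 (by norm_num)) ?_
  refine DR.inc (hi 10 (by norm_num)) ?_
  refine DR.inc (hi 11 (by norm_num)) ?_
  refine DR.goto (hi 12 (by norm_num)) ?_
  have w : ∀ j, j ≠ b → j ≠ b + 1 → j ≠ b + 2 → j ≠ b + 6 → f3 j = c.idx j := by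
    intro j h0 h1 h2 h6
    rw [q3 j h1 h2, q2 j h0 h6, q1 j h0]
  have w0 : f3 b = b + x.1.length := by rw [q3 b (by omega) (by omega), v2]
  have w1 : f3 (b + 1) = b + x.1.length := by
    rw [p3, q2 _ (by omega) (by omega), q1 _ (by omega), cj _ (by omega)]; omega
  have w2 : f3 (b + 2) = b + x.1.length := by
    rw [p3', q2 _ (by omega) (by omega), q1 _ (by omega), cj _ (by omega)]; omega
  have w3 : f3 (b + 3) = 1 := by
    rw [w _ (by omega) (by omega) (by omega) (by omega), cj _ (by omega)]
  have w4 : f3 (b + 4) = 1 := by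
    rw [w _ (by omega) (by omega) (by omega) (by omega), cj _ (by omega)]
  refine DR.refl ?_
  constructor
  · simp [hc, inputConfig]
  · intro j hj
    have a0 : j ≠ b := by omega
    have a1 : j ≠ b + 1 := by omega
    have a2 : j ≠ b + 2 := by omega
    have a4 : j ≠ b + 4 := by omega
    simp [a1, a2, a4, w j a0 a1 a2 (by omega)]
  · intro j hj
    simp [w0]
    by_cases h : j = 1
    · rw [h, c1]; omega
    · rw [cj j h]; omega
  · simp [w0]
  · simp [w0, w1]
  · simp [w0, w2]
  · simp [w3]
  · simp [w4]
  · intro i _; rfl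
  · intro i hi
    simp only [] at hi
    simp [w0] at hi ⊢
    rw [creg i (by omega), creg _ (by omega)]

end Setup

/-! ### Simulation of a single step -/

section Step

variable {A : FOStruct} {i₁ i₂ : A.constIdx} {r : A.relIdx} {b S : ℕ} {M : Machine A}
  {O : Set (Tup A)} {c c' : Config A}

lemma map_reg_eq (hrel : Rel b S c c') {args : List ℕ} (h : ∀ a ∈ args, a < b) :
    args.map c'.reg = args.map c.reg :=
  List.map_congr_left fun a ha => hrel.reg a (by have := h a ha; have := hrel.le_P; omega)

/-- Writing the same value into a register below `P` on both sides preserves `Rel`. -/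
lemma Rel.write (hrel : Rel b S c c') {j : ℕ} {u : A.U} (hj : j < c'.idx b) {l l' : ℕ}
    (hl : l' = S * (l + 1)) :
    Rel b S ⟨l, c.idx, Function.update c.reg j u⟩ ⟨l', c'.idx, Function.update c'.reg j u⟩ := by
  refine ⟨hl, hrel.idx, hrel.idx_lt, hrel.le_P, hrel.p1, hrel.p2, hrel.s1, hrel.s2, ?_, ?_⟩
  · intro i hi
    by_cases h : i = j
    · simp [h]
    · simpa [h] using hrel.reg i hi
  · intro i hi
    have h1 : i ≠ j := by dsimp only at hi; omega
    have h2 : c'.idx b ≠ j := by omega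
    simpa [h1, h2] using hrel.fill i hi

lemma Rel.jump (hrel : Rel b S c c') {l l' : ℕ} (hl : l' = S * (l + 1)) :
    Rel b S ⟨l, c.idx, c.reg⟩ ⟨l', c'.idx, c'.reg⟩ :=
  ⟨hl, hrel.idx, hrel.idx_lt, hrel.le_P, hrel.p1, hrel.p2, hrel.s1, hrel.s2, hrel.reg, hrel.fill⟩

lemma det_step (hb : 3 ≤ b) (hS : b + 60 ≤ S) (hrel : Rel b S c c') {ins : Instr A}
    (hi : M.prog[c.label]? = some ins) (hdet : ins.isDet) (hbd : Bdd b ins) :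
    DR1 (sim i₁ i₂ r b S M.prog O) c' (Rel b S (execDet ins c)) := by
  have hblk : ∀ k < S, (sim i₁ i₂ r b S M.prog O).prog[c'.label + k]?
      = some (blk i₁ i₂ r b S c.label ins k) := by
    intro k hk; rw [hrel.label]; exact sim_blk hi hk
  have hP := hrel.le_P
  have h0 := hblk 0 (by omega)
  have h1 := hblk 1 (by omega)
  rw [Nat.add_zero] at h0
  cases ins with
  | apply j i args =>
    refine ⟨_, dstep _ h0 trivial, DR.goto h1 (DR.refl ?_)⟩
    rw [map_reg_eq hrel hbd.2]
    exact hrel.write (lt_of_lt_of_le hbd.1 hP) rfl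
  | const j i =>
    refine ⟨_, dstep _ h0 trivial, DR.goto h1 (DR.refl ?_)⟩
    exact hrel.write (lt_of_lt_of_le hbd hP) rfl
  | copy j k =>
    refine ⟨_, dstep _ h0 trivial, DR.goto h1 (DR.refl ?_)⟩
    rw [hrel.idx j hbd.1, hrel.idx k hbd.2, hrel.reg _ (hrel.idx_lt k hbd.2).le]
    exact hrel.write (hrel.idx_lt j hbd.1) rfl
  | branchRel i args l₁ l₂ =>
    refine ⟨_, dstep _ h0 trivial, DR.refl ?_⟩
    by_cases h : A.rels i (args.map c.reg)
    · have h' : A.rels i (args.map c'.reg) := by rwa [map_reg_eq hrel hbd]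
      simp only [execDet, blk, if_pos h, if_pos h']
      exact hrel.jump rfl
    · have h' : ¬ A.rels i (args.map c'.reg) := by rwa [map_reg_eq hrel hbd]
      simp only [execDet, blk, if_neg h, if_neg h']
      exact hrel.jump rfl
  | branchIdx j k l₁ l₂ =>
    refine ⟨_, dstep _ h0 trivial, DR.refl ?_⟩
    by_cases h : c.idx j = c.idx k
    · have h' : c'.idx j = c'.idx k := by rwa [hrel.idx j hbd.1, hrel.idx k hbd.2]
      simp only [execDet, blk, if_pos h, if_pos h']
      exact hrel.jump rfl
    · have h' : ¬ c'.idx j = c'.idx k := by rwa [hrel.idx j hbd.1, hrel.idx k hbd.2]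
      simp only [execDet, blk, if_neg h, if_neg h']
      exact hrel.jump rfl
  | incIdx j =>
    have hj : j < b := hbd
    refine ⟨_, dstep _ h0 trivial, ?_⟩
    refine DR.inc (hblk 1 (by omega)) ?_
    refine DR.inc (hblk 2 (by omega)) ?_
    refine DR.inc (hblk 3 (by omega)) ?_
    refine DR.inc (hblk 4 (by omega)) ?_
    refine DR.goto (hblk 5 (by omega)) (DR.refl ?_)
    have n0 : j ≠ b := by omega
    have n1 : j ≠ b + 1 := by omega
    have n2 : j ≠ b + 2 := by omega
    have m0 : b ≠ j := by omega
    have m1 : b + 1 ≠ j := by omega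
    have m2 : b + 2 ≠ j := by omega
    have m3 : b + 3 ≠ j := by omega
    have m4 : b + 4 ≠ j := by omega
    constructor
    · rfl
    · intro k hk
      have k0 : k ≠ b := by omega
      have k1 : k ≠ b + 1 := by omega
      have k2 : k ≠ b + 2 := by omega
      by_cases hkj : k = j
      · subst hkj; simp [execDet, k0, k1, k2, hrel.idx k hk]
      · simp [execDet, k0, k1, k2, hkj, hrel.idx k hk]
    · intro k hk
      have := hrel.idx_lt k hk
      by_cases hkj : k = j
      · subst hkj; simp [execDet, m0, this]
      · simp [execDet, m0, hkj]; omega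
    · simp [m0]; omega
    · simp [m0, m1, hrel.p1]
    · simp [m0, m2, hrel.p2]
    · simp [m3, hrel.s1]
    · simp [m4, hrel.s2]
    · intro i hi
      simp [m0] at hi
      simp only [execDet, hrel.p1]
      by_cases h : i = c'.idx b + 1
      · simp only [h, Function.update_self]
        rw [hrel.reg _ le_rfl, hrel.fill (c'.idx b + 1) (by omega)]
      · rw [Function.update_of_ne h]
        exact hrel.reg i (by omega)
    · intro i hi
      simp [m0, execDet] at hi ⊢
      rw [hrel.fill i (by omega), hrel.fill (c'.idx b + 1) (by omega)]
  | resetIdx j =>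
    have hj : j < b := hbd
    refine ⟨_, dstep _ h0 trivial, DR.goto h1 (DR.refl ?_)⟩
    have m0 : b ≠ j := by omega
    have m1 : b + 1 ≠ j := by omega
    have m2 : b + 2 ≠ j := by omega
    have m3 : b + 3 ≠ j := by omega
    have m4 : b + 4 ≠ j := by omega
    constructor
    · rfl
    · intro k hk
      by_cases hkj : k = j
      · subst hkj; simp [execDet]
      · simp [execDet, hkj, hrel.idx k hk]
    · intro k hk
      have := hrel.idx_lt k hk
      by_cases hkj : k = j
      · subst hkj; simp [execDet, m0]; omega
      · simp [execDet, m0, hkj]; omega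
    · simpa [m0] using hP
    · simpa [m0, m1] using hrel.p1
    · simpa [m0, m2] using hrel.p2
    · simpa [m3] using hrel.s1
    · simpa [m4] using hrel.s2
    · intro i hi
      simp [m0] at hi
      exact hrel.reg i hi
    · intro i hi
      simp [m0] at hi ⊢
      exact hrel.fill i hi
  | orGoto l₁ l₂ => exact hdet.elim
  | nuGuess j => exact hdet.elim

/-- The part of an `orGoto` block before the guess: the registers `1, 2` are saved above `P`, and
the code of the registers `3, …, P + 2` is computed. -/
lemma or_pre (hb : 3 ≤ b) (hS : b + 60 ≤ S) (hr : ∀ x y : A.U, A.rels r [x, y] ↔ x = y)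
    (hrel : Rel b S c c') {l₁ l₂ : ℕ} (hi : M.prog[c.label]? = some (.orGoto l₁ l₂)) :
    DR (sim i₁ i₂ r b S M.prog O) c' (fun d => d.label = S * (c.label + 1) + 26 ∧
      (∀ j < b + 5, d.idx j = c'.idx j) ∧
      d.idx (b + 9) = code (A.consts i₁) (A.consts i₂) d.reg (c'.idx b) ∧
      d.reg (c'.idx b + 1) = c.reg 1 ∧ d.reg (c'.idx b + 2) = c.reg 2 ∧
      ∀ i ≤ c'.idx b, i ≠ 1 → i ≠ 2 → d.reg i = c.reg i) := by
  have hblk : ∀ k < S, (sim i₁ i₂ r b S M.prog O).prog[S * (c.label + 1) + k]?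
      = some (orBlk i₁ i₂ r b (S * (c.label + 1)) (S * (l₁ + 1)) (S * (l₂ + 1)) k) :=
    fun k hk => sim_blk hi hk
  have hP := hrel.le_P
  have hc' : c' = ⟨S * (c.label + 1), c'.idx, c'.reg⟩ := by rw [← hrel.label]
  rw [hc']
  refine DR.copy (hblk 0 (by omega)) ?_
  refine DR.copy (hblk 1 (by omega)) ?_
  refine enc_spec (o := S * (c.label + 1) + 2) (e := b + 9) (b := b) (i₁ := i₁) (i₂ := i₂) (r := r)
    ?_ le_rfl hr (c'.idx b) _ _ hrel.p2 hrel.s2 ?_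
  · intro k hk
    rw [Nat.add_assoc, hblk (2 + k) (by omega)]
    simp [orBlk, show 2 + k < 26 by omega, show ¬ (2 + k < 2) by omega]
  intro f' g' q1 q2 q3
  have hg : ∀ i, 3 ≤ i → g' i = _ := fun i hi => q3 i (by omega) (by omega)
  refine DR.refl ⟨rfl, ?_, ?_, ?_, ?_, ?_⟩
  · intro j hj
    exact q2 j (by omega) (by omega) (by omega) (by omega)
  · dsimp only
    rw [q1]
    exact (code_congr _ hg).symm
  · dsimp only
    rw [hg _ (by omega)]
    simp [hrel.p1, hrel.p2, hrel.s1]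
    exact hrel.reg 1 (by omega)
  · dsimp only
    rw [hg _ (by omega)]
    simp [hrel.p1, hrel.p2, hrel.s2, show (2 : ℕ) ≠ c'.idx b + 1 by omega]
    exact hrel.reg 2 (by omega)
  · intro i hi h1 h2
    replace hi : i ≤ c'.idx b := hi
    dsimp only
    rw [q3 i h1 h2]
    simp [hrel.p1, hrel.p2, show i ≠ c'.idx b + 1 by omega, show i ≠ c'.idx b + 2 by omega]
    exact hrel.reg i hi

/-- The part of an `orGoto` block after the guess, up to the comparison of the two codes. -/
lemma or_mid (hS : b + 60 ≤ S) (hr : ∀ x y : A.U, A.rels r [x, y] ↔ x = y)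
    {l₁ l₂ P : ℕ} (hi : M.prog[c.label]? = some (.orGoto l₁ l₂)) (f : ℕ → ℕ) (g : ℕ → A.U)
    (h2 : f (b + 2) = P + 2) (h4 : f (b + 4) = 2) :
    DR (sim i₁ i₂ r b S M.prog O) ⟨S * (c.label + 1) + 27, f, g⟩
      (fun d => d.label = S * (c.label + 1) + 55 ∧
      (∀ j < b + 5, d.idx j = f j) ∧ d.idx (b + 9) = f (b + 9) ∧
      (g 1 = A.consts i₁ → d.idx (b + 8) = 1) ∧ (g 1 ≠ A.consts i₁ → d.idx (b + 8) = 2) ∧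
      d.idx (b + 10) = code (A.consts i₁) (A.consts i₂) g P ∧
      ∀ i, i ≠ 1 → i ≠ 2 → d.reg i = g i) := by
  have hblk : ∀ k < S, (sim i₁ i₂ r b S M.prog O).prog[S * (c.label + 1) + k]?
      = some (orBlk i₁ i₂ r b (S * (c.label + 1)) (S * (l₁ + 1)) (S * (l₂ + 1)) k) :=
    fun k hk => sim_blk hi hk
  have henc : ∀ k < 24, (sim i₁ i₂ r b S M.prog O).prog[S * (c.label + 1) + 31 + k]?
      = some (enc i₁ i₂ r b (b + 10) (S * (c.label + 1) + 31) k) := by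
    intro k hk
    rw [Nat.add_assoc, hblk (31 + k) (by omega)]
    simp [orBlk, show 31 + k < 55 by omega, show ¬ (31 + k < 26) by omega,
      show ¬ (31 + k < 2) by omega]
  refine DR.reset (hblk 27 (by omega)) ?_
  refine DR.const (hblk 28 (by omega)) ?_
  by_cases h : g 1 = A.consts i₁
  · refine DR.rel_pos (hblk 29 (by omega)) (by simp [hr, h]) ?_
    refine enc_spec henc (by omega) hr P _ _ (by simp [h2]) (by simp [h4]) ?_
    intro f' g' q1 q2 q3
    refine DR.refl ⟨rfl, ?_, ?_, ?_, ?_, ?_, ?_⟩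
    · intro j hj
      dsimp only
      rw [q2 j (by omega) (by omega) (by omega) (by omega)]
      simp [show j ≠ b + 8 by omega]
    · dsimp only
      rw [q2 _ (by omega) (by omega) (by omega) (by omega)]; simp
    · intro _
      dsimp only
      rw [q2 _ (by omega) (by omega) (by omega) (by omega)]; simp
    · intro h'; exact absurd h h'
    · dsimp only
      rw [q1]
      exact code_congr _ fun i hi => by simp [show i ≠ 2 by omega]
    · intro i n1 n2
      dsimp only
      rw [q3 i n1 n2]; simp [n2]
  · refine DR.rel_neg (hblk 29 (by omega)) (by simp [hr, h]) ?_
    refine DR.inc (hblk 30 (by omega)) ?_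
    refine enc_spec henc (by omega) hr P _ _ (by simp [h2]) (by simp [h4]) ?_
    intro f' g' q1 q2 q3
    refine DR.refl ⟨rfl, ?_, ?_, ?_, ?_, ?_, ?_⟩
    · intro j hj
      dsimp only
      rw [q2 j (by omega) (by omega) (by omega) (by omega)]
      simp [show j ≠ b + 8 by omega]
    · dsimp only
      rw [q2 _ (by omega) (by omega) (by omega) (by omega)]; simp
    · intro h'; exact absurd h' h
    · intro _
      dsimp only
      rw [q2 _ (by omega) (by omega) (by omega) (by omega)]; simp
    · dsimp only
      rw [q1]
      exact code_congr _ fun i hi => by simp [show i ≠ 2 by omega]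
    · intro i n1 n2
      dsimp only
      rw [q3 i n1 n2]; simp [n2]

/-- The end of an `orGoto` block: if the registers above `2` carry the right values,
the registers `1, 2` are restored and the branch is taken. -/
lemma or_post (hb : 3 ≤ b) (hS : b + 60 ≤ S) (hrel : Rel b S c c') {l₁ l₂ : ℕ}
    (hi : M.prog[c.label]? = some (.orGoto l₁ l₂)) (f : ℕ → ℕ) (g : ℕ → A.U)
    (hf : ∀ j < b + 5, f j = c'.idx j) (he : f (b + 9) = f (b + 10))
    (hg1 : g (c'.idx b + 1) = c.reg 1) (hg2 : g (c'.idx b + 2) = c.reg 2)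
    (hg : ∀ i ≤ c'.idx b, i ≠ 1 → i ≠ 2 → g i = c.reg i) :
    DR (sim i₁ i₂ r b S M.prog O) ⟨S * (c.label + 1) + 55, f, g⟩
      (Rel b S ⟨if f (b + 8) = 1 then l₁ else l₂, c.idx, c.reg⟩) := by
  have hblk : ∀ k < S, (sim i₁ i₂ r b S M.prog O).prog[S * (c.label + 1) + k]?
      = some (orBlk i₁ i₂ r b (S * (c.label + 1)) (S * (l₁ + 1)) (S * (l₂ + 1)) k) :=
    fun k hk => sim_blk hi hk
  have hP := hrel.le_P
  have f0 : f b = c'.idx b := hf _ (by omega)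
  have f1 : f (b + 1) = c'.idx b + 1 := by rw [hf _ (by omega), hrel.p1]
  have f2 : f (b + 2) = c'.idx b + 2 := by rw [hf _ (by omega), hrel.p2]
  have f3 : f (b + 3) = 1 := by rw [hf _ (by omega), hrel.s1]
  have f4 : f (b + 4) = 2 := by rw [hf _ (by omega), hrel.s2]
  refine DR.idx_eq (hblk 55 (by omega)) he ?_
  refine DR.copy (hblk 56 (by omega)) ?_
  refine DR.copy (hblk 57 (by omega)) ?_
  have key : ∀ l, Rel b S ⟨l, c.idx, c.reg⟩ ⟨S * (l + 1), f, Function.update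
      (Function.update g (f (b + 3)) (g (f (b + 1)))) (f (b + 4))
      (Function.update g (f (b + 3)) (g (f (b + 1))) (f (b + 2)))⟩ := by
    intro l
    rw [f1, f2, f3, f4]
    refine ⟨rfl, ?_, ?_, ?_, ?_, ?_, f3, f4, ?_, ?_⟩
    · intro j hj; exact (hf j (by omega)).trans (hrel.idx j hj)
    · intro j hj; simpa [f0] using hrel.idx_lt j hj
    · simpa [f0] using hP
    · simp [f0, f1]
    · simp [f0, f2]
    · intro i hi
      simp [f0] at hi
      by_cases i2 : i = 2
      · subst i2; simpa using hg2
      by_cases i1 : i = 1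
      · subst i1; simpa using hg1
      simpa [i1, i2] using hg i hi i1 i2
    · simpa [f0] using hrel.fill
  by_cases h : f (b + 8) = 1
  · refine DR.idx_eq (hblk 58 (by omega)) (by rw [h, f3]) (DR.refl ?_)
    rw [if_pos h]; exact key l₁
  · refine DR.idx_ne (hblk 58 (by omega)) (by rw [f3]; exact h) (DR.refl ?_)
    rw [if_neg h]; exact key l₂

lemma writeFrom_zero (g : ℕ → A.U) (y : List A.U) : writeFrom g 1 y 0 = g 0 := by
  simp [writeFrom]

lemma writeFrom_cases {a₁ a₂ : A.U} (g : ℕ → A.U) {y : Tup A} (hy : y ∈ binTups A a₁ a₂) (i : ℕ) :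
    writeFrom g 1 y.1 i = g i ∨ writeFrom g 1 y.1 i = a₁ ∨ writeFrom g 1 y.1 i = a₂ := by
  unfold writeFrom
  split_ifs with h
  · right
    rw [List.getD_eq_getElem _ _ h.2]
    exact hy _ (List.getElem_mem h.2)
  · exact .inl rfl

lemma writeFrom_sing (g : ℕ → A.U) (u : A.U) : writeFrom g 1 [u] = Function.update g 1 u := by
  funext i
  unfold writeFrom
  by_cases h : i = 1
  · subst h; simp
  · rw [if_neg (by simp only [List.length_singleton]; omega), Function.update_of_ne h]

/-- Forward simulation of `orGoto`: guessing a one-component tuple is harmless. -/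
lemma or_forward (hb : 3 ≤ b) (hS : b + 60 ≤ S) (hr : ∀ x y : A.U, A.rels r [x, y] ↔ x = y)
    (hne : A.consts i₁ ≠ A.consts i₂) (hrel : Rel b S c c') {l₁ l₂ : ℕ}
    (hi : M.prog[c.label]? = some (.orGoto l₁ l₂)) {l : ℕ} (hl : l = l₁ ∨ l = l₂) :
    ∃ d', Reaches (sim i₁ i₂ r b S M.prog (binTups A (A.consts i₁) (A.consts i₂))) c' d' ∧
      Rel b S ⟨l, c.idx, c.reg⟩ d' := by
  have hP := hrel.le_P
  obtain ⟨d, hd, dl, dI, dE, d1, d2, dr⟩ := or_pre (O := binTups A (A.consts i₁) (A.consts i₂))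
    (i₁ := i₁) (i₂ := i₂) hb hS hr hrel hi
  -- the guessed value that selects the desired branch
  obtain ⟨u, hu, hul⟩ : ∃ u, (u = A.consts i₁ ∨ u = A.consts i₂) ∧
      ((u = A.consts i₁ ∧ l = l₁) ∨ (u ≠ A.consts i₁ ∧ l = l₂)) := by
    rcases hl with rfl | rfl
    · exact ⟨_, .inl rfl, .inl ⟨rfl, rfl⟩⟩
    · exact ⟨_, .inr rfl, .inr ⟨hne.symm, rfl⟩⟩
  have hg : NStep (sim i₁ i₂ r b S M.prog (binTups A (A.consts i₁) (A.consts i₂))) d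
      ⟨S * (c.label + 1) + 27, d.idx, Function.update d.reg 1 u⟩ := by
    refine ⟨.nuGuess 1, ?_, singTup A u, ?_, ?_⟩
    · rw [dl]; exact sim_blk hi (by omega)
    · intro v hv
      obtain rfl : v = u := by simpa [singTup] using hv
      exact hu
    · simp only [singTup, writeFrom_sing, dl]
  obtain ⟨d3, hd3, ml, mI, mE, mt, mf, mF, mr⟩ :=
    or_mid (O := binTups A (A.consts i₁) (A.consts i₂)) (i₁ := i₁) (i₂ := i₂) (P := c'.idx b)
      hS hr hi d.idx (Function.update d.reg 1 u)
      (by rw [dI _ (by omega), hrel.p2]) (by rw [dI _ (by omega), hrel.s2])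
  have hreg : ∀ i, i ≠ 1 → i ≠ 2 → d3.reg i = d.reg i := by
    intro i n1 n2; rw [mr i n1 n2]; simp [n1]
  obtain ⟨d4, hd4, h4⟩ := or_post (O := binTups A (A.consts i₁) (A.consts i₂))
    (i₁ := i₁) (i₂ := i₂) (r := r) hb hS hrel hi d3.idx d3.reg
    (fun j hj => by rw [mI j hj, dI j hj])
    (by
      rw [mE, mF, dE]
      exact code_congr _ fun i hi => by simp [show i ≠ 1 by omega])
    (by rw [hreg _ (by omega) (by omega), d1]) (by rw [hreg _ (by omega) (by omega), d2])
    (fun i hi n1 n2 => by rw [hreg i n1 n2, dr i hi n1 n2])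
  refine ⟨d4, ?_, ?_⟩
  · refine (reaches_of_dreach hd).trans (.head hg ((reaches_of_dreach hd3).trans ?_))
    have : d3 = ⟨S * (c.label + 1) + 55, d3.idx, d3.reg⟩ := by rw [← ml]
    rw [this]
    exact reaches_of_dreach hd4
  · have : (if d3.idx (b + 8) = 1 then l₁ else l₂) = l := by
      rcases hul with ⟨h1, h2⟩ | ⟨h1, h2⟩
      · rw [if_pos (mt (by simpa using h1)), h2]
      · rw [if_neg (by rw [mf (by simpa using h1)]; norm_num), h2]
    rwa [this] at h4

/-- Backward simulation of `orGoto`: a run that halts has guessed harmlessly, since otherwise the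
two codes differ and the machine loops forever. -/
lemma or_backward (hb : 3 ≤ b) (hS : b + 60 ≤ S) (hr : ∀ x y : A.U, A.rels r [x, y] ↔ x = y)
    (hne : A.consts i₁ ≠ A.consts i₂) (hrel : Rel b S c c') {l₁ l₂ : ℕ}
    (hi : M.prog[c.label]? = some (.orGoto l₁ l₂)) {n : ℕ} {h : Config A}
    (hh : Halted (sim i₁ i₂ r b S M.prog (binTups A (A.consts i₁) (A.consts i₂))) h)
    (hrun : Run (sim i₁ i₂ r b S M.prog (binTups A (A.consts i₁) (A.consts i₂))) n c' h) :
    ∃ l d', (l = l₁ ∨ l = l₂) ∧ Rel b S ⟨l, c.idx, c.reg⟩ d' ∧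
      ∃ m < n, Run (sim i₁ i₂ r b S M.prog (binTups A (A.consts i₁) (A.consts i₂))) m d' h := by
  have hP := hrel.le_P
  obtain ⟨d, hd, dl, dI, dE, d1, d2, dr⟩ := or_pre (O := binTups A (A.consts i₁) (A.consts i₂))
    (i₁ := i₁) (i₂ := i₂) hb hS hr hrel hi
  obtain ⟨n1, hn1, hrun⟩ := run_of_dreach hd hh hrun
  have hins : (sim i₁ i₂ r b S M.prog (binTups A (A.consts i₁) (A.consts i₂))).prog[d.label]?
      = some (.nuGuess 1) := by rw [dl]; exact sim_blk hi (by omega)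
  cases n1 with
  | zero =>
    cases hrun
    rw [List.getElem?_eq_none hh] at hins
    cases hins
  | succ n1 =>
  obtain ⟨x, ⟨ins, hx, hstep⟩, hrun⟩ := hrun
  rw [hins] at hx
  cases hx
  obtain ⟨y, hy, rfl⟩ := hstep
  change y ∈ binTups A (A.consts i₁) (A.consts i₂) at hy
  rw [dl] at hrun
  obtain ⟨d3, hd3, ml, mI, mE, mt, mf, mF, mr⟩ :=
    or_mid (O := binTups A (A.consts i₁) (A.consts i₂)) (i₁ := i₁) (i₂ := i₂) (P := c'.idx b)
      hS hr hi d.idx (writeFrom d.reg 1 y.1)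
      (by rw [dI _ (by omega), hrel.p2]) (by rw [dI _ (by omega), hrel.s2])
  obtain ⟨n2, hn2, hrun⟩ := run_of_dreach hd3 hh hrun
  have e3 : d3 = ⟨S * (c.label + 1) + 55, d3.idx, d3.reg⟩ := by rw [← ml]
  by_cases hE : d3.idx (b + 9) = d3.idx (b + 10)
  · have hdig := dig_eq_of_code_eq (c'.idx b) (dE.symm.trans (mE.symm.trans (hE.trans mF)))
    have hreg : ∀ i ≤ c'.idx b + 2, i ≠ 1 → i ≠ 2 → d3.reg i = d.reg i := by
      intro i hi n1 n2
      rw [mr i n1 n2]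
      rcases Nat.eq_zero_or_pos i with rfl | hpos
      · exact writeFrom_zero _ _
      obtain ⟨k, rfl⟩ : ∃ k, i = k + 3 := ⟨i - 3, by omega⟩
      exact eq_of_dig_eq hne (hdig k (by omega)) (writeFrom_cases _ hy _)
    obtain ⟨d4, hd4, h4⟩ := or_post (O := binTups A (A.consts i₁) (A.consts i₂))
      (i₁ := i₁) (i₂ := i₂) (r := r) hb hS hrel hi d3.idx d3.reg
      (fun j hj => by rw [mI j hj, dI j hj]) hE
      (by rw [hreg _ (by omega) (by omega) (by omega), d1])
      (by rw [hreg _ (by omega) (by omega) (by omega), d2])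
      (fun i hi n1 n2 => by rw [hreg i (by omega) n1 n2, dr i hi n1 n2])
    rw [← e3] at hd4
    obtain ⟨m, hm, hrun⟩ := run_of_dreach hd4 hh hrun
    refine ⟨_, d4, ?_, h4, m, by omega, hrun⟩
    split_ifs
    · exact .inl rfl
    · exact .inr rfl
  · exfalso
    refine no_run_of_loop ?_ hh n2 hrun
    have hins3 : (sim i₁ i₂ r b S M.prog (binTups A (A.consts i₁) (A.consts i₂))).prog[d3.label]?
        = some (.branchIdx (b + 9) (b + 10) (S * (c.label + 1) + 56) (S * (c.label + 1) + 55)) := by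
      rw [ml]; exact sim_blk hi (by omega)
    have := dstep _ hins3 trivial
    have e : execDet (.branchIdx (b + 9) (b + 10) (S * (c.label + 1) + 56)
        (S * (c.label + 1) + 55)) d3 = d3 := by
      conv_rhs => rw [e3]
      simp only [execDet, if_neg hE]
    rwa [e] at this

lemma forward (hb : 3 ≤ b) (hS : b + 60 ≤ S) (hr : ∀ x y : A.U, A.rels r [x, y] ↔ x = y)
    (hne : A.consts i₁ ≠ A.consts i₂) (hM : M.NDB) (hbd : ∀ ins ∈ M.prog, Bdd b ins)
    {h : Config A} (hreach : Reaches M c h) (hrel : Rel b S c c') :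
    ∃ h', Reaches (sim i₁ i₂ r b S M.prog (binTups A (A.consts i₁) (A.consts i₂))) c' h' ∧
      Rel b S h h' := by
  induction hreach with
  | refl => exact ⟨c', .refl, hrel⟩
  | tail _ hstep ih =>
    obtain ⟨d', hd', hrel'⟩ := ih
    obtain ⟨ins, hi, hx⟩ := hstep
    have hmem := List.mem_of_getElem? hi
    by_cases hdet : ins.isDet
    · obtain ⟨e, he, e', he', hq⟩ := det_step (i₁ := i₁) (i₂ := i₂) (r := r)
        (O := binTups A (A.consts i₁) (A.consts i₂)) hb hS hrel' hi hdet (hbd _ hmem)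
      refine ⟨e', hd'.trans (reaches_of_dreach (.head he he')), ?_⟩
      cases ins <;> first | exact hdet.elim | (cases hx; exact hq)
    · cases ins <;> try exact absurd trivial hdet
      · rename_i l₁ l₂
        rcases hx with rfl | rfl
        · obtain ⟨e', he', hq⟩ := or_forward hb hS hr hne hrel' hi (.inl rfl)
          exact ⟨e', hd'.trans he', hq⟩
        · obtain ⟨e', he', hq⟩ := or_forward hb hS hr hne hrel' hi (.inr rfl)
          exact ⟨e', hd'.trans he', hq⟩
      · exact (hM _ hmem).elim

lemma backward (hb : 3 ≤ b) (hS : b + 60 ≤ S) (hr : ∀ x y : A.U, A.rels r [x, y] ↔ x = y)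
    (hne : A.consts i₁ ≠ A.consts i₂) (hM : M.NDB) (hbd : ∀ ins ∈ M.prog, Bdd b ins)
    {h' : Config A}
    (hh : Halted (sim i₁ i₂ r b S M.prog (binTups A (A.consts i₁) (A.consts i₂))) h') (n : ℕ) :
    ∀ c c' : Config A, Rel b S c c' →
    Run (sim i₁ i₂ r b S M.prog (binTups A (A.consts i₁) (A.consts i₂))) n c' h' →
    ∃ h, Reaches M c h ∧ Halted M h ∧ output h = output h' := by
  induction n using Nat.strong_induction_on with
  | _ n ih =>
    intro c c' hrel hrun
    rcases hi : M.prog[c.label]? with _ | ins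
    · have hc : Halted M c := List.getElem?_eq_none_iff.1 hi
      have hc' := (rel_halted_iff (i₁ := i₁) (i₂ := i₂) (r := r)
        (O := binTups A (A.consts i₁) (A.consts i₂)) (show 0 < S by omega) hrel).2 hc
      refine ⟨c, .refl, hc, ?_⟩
      cases n with
      | zero => cases hrun; exact (hrel.output_eq hb).symm
      | succ n =>
        obtain ⟨d, hd, -⟩ := hrun
        exact absurd hd (not_step_of_halted hc')
    have hmem := List.mem_of_getElem? hi
    by_cases hdet : ins.isDet
    · obtain ⟨e, he, e', he', hq⟩ := det_step (i₁ := i₁) (i₂ := i₂) (r := r)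
        (O := binTups A (A.consts i₁) (A.consts i₂)) hb hS hrel hi hdet (hbd _ hmem)
      obtain ⟨m, hm, hrun⟩ := he.run hh hrun
      obtain ⟨m', hm', hrun⟩ := run_of_dreach he' hh hrun
      obtain ⟨h, h1, h2⟩ := ih m' (by omega) _ _ hq hrun
      exact ⟨h, .head ((dstep ins hi hdet _).2 rfl) h1, h2⟩
    · cases ins <;> try exact absurd trivial hdet
      · rename_i l₁ l₂
        obtain ⟨l, d', hl, hq, m, hm, hrun⟩ := or_backward hb hS hr hne hrel hi hh hrun
        obtain ⟨h, h1, h2⟩ := ih m hm _ _ hq hrun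
        refine ⟨h, .head ⟨_, hi, ?_⟩ h1, h2⟩
        rcases hl with rfl | rfl
        · exact .inl rfl
        · exact .inr rfl
      · exact (hM _ hmem).elim

end Step

end NuSim

/-- Theorem: Identity and oracle instructions.
Let `A ∈ Struc_{c₁,c₂}` contain the identity relation `id_{U_A}` among its
relations and let `Q = {c₁,c₂}^∞`.  Then
`{Res_M | M ∈ M_A^{NDB}} ⊆ {Res_M | M ∈ M_A^ν(Q)}`. -/
theorem ndb_res_subset_nu_res
    (A : FOStruct) (c₁ c₂ : A.U)
    (h₁ : HasConst A c₁) (h₂ : HasConst A c₂) (hne : c₁ ≠ c₂)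
    (hid : HasIdRel A) :
    ResClassNDB A ⊆ ResClassNu A (binTups A c₁ c₂) := by
  rintro _ ⟨M, hM, rfl⟩
  obtain ⟨i₁, rfl⟩ := h₁
  obtain ⟨i₂, rfl⟩ := h₂
  obtain ⟨r, hr⟩ := hid
  obtain ⟨b, hb, hbd⟩ := NuSim.exists_bdd M.prog
  refine ⟨NuSim.sim i₁ i₂ r b (b + 60) M.prog _, NuSim.sim_nuMach .., ?_⟩
  funext x
  obtain ⟨s, hs, hrel⟩ := NuSim.setup_spec (S := b + 60)
    (M := NuSim.sim i₁ i₂ r b (b + 60) M.prog (binTups A (A.consts i₁) (A.consts i₂)))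
    (fun k hk => NuSim.sim_setup (by omega)) hb x
  ext z
  constructor
  · rintro ⟨h, hreach, hh, rfl⟩
    obtain ⟨h', hreach', hrel'⟩ := NuSim.forward hb le_rfl hr hne hM hbd hreach hrel
    exact ⟨h', (NuSim.reaches_of_dreach hs).trans hreach',
      (NuSim.rel_halted_iff (by omega) hrel').2 hh, hrel'.output_eq hb⟩
  · rintro ⟨h', hreach', hh', rfl⟩
    obtain ⟨n, hrun⟩ := NuSim.exists_run hreach'
    obtain ⟨m, -, hrun⟩ := NuSim.run_of_dreach hs hh' hrun
    obtain ⟨h, h1, h2, h3⟩ := NuSim.backward hb le_rfl hr hne hM hbd hh' m _ _ hrel hrun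
    exact ⟨h, h1, h2, h3⟩
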